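/- arXiv:2111.05832 — 2 statements merged into one kernel-verified Lean document; each statement's English description precedes it below -/
import Mathlib

section
/- Let Ω ⊆ ℂ^n be a bounded open set, let μ be a Borel measure on Ω that is absolutely continuous with respect to Lebesgue measure and whose Radon–Nikodym density is bounded below by a positive constant on every compact subset of Ω. Let φ : Ω → ℝ and φ_j : Ω → ℝ (j ≥ 1) be measurable and locally bounded functions such that the sequence (φ_j(w))_j is nonincreasing for every w ∈ Ω and φ_j(w) → φ(w) as j → ∞ for every w ∈ Ω (equivalently, the metrics e^{−φ_j} increase pointwise to e^{−φ}). Fix z ∈ Ω, let K_j be the diagonal Bergman kernel of H²(Ω,μ,φ_j) and K the diagonal Bergman kernel of H²(Ω,μ,φ). Then the sequence (K_j(z))_j is nonincreasing and K_j(z) → K(z) as j → ∞. -/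
open MeasureTheory Set
open scoped ENNReal ComplexOrder

noncomputable section

/-- The squared weighted `L²` norm `∫_Ω ‖f‖² e^{−φ} dμ`. -/
def bergNormSq {n : ℕ} (Ω : Set (Fin n → ℂ)) (φ : (Fin n → ℂ) → ℝ)
    (μ : Measure (Fin n → ℂ)) (f : (Fin n → ℂ) → ℂ) : ℝ≥0∞ :=
  ∫⁻ z in Ω, ENNReal.ofReal (‖f z‖ ^ 2 * Real.exp (-(φ z))) ∂μ

/-- The diagonal Bergman kernel of the weighted Bergman space `H²(Ω,μ,φ)`. -/
def bergKernel {n : ℕ} (Ω : Set (Fin n → ℂ)) (φ : (Fin n → ℂ) → ℝ)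
    (μ : Measure (Fin n → ℂ)) (z : Fin n → ℂ) : ℝ≥0∞ :=
  ⨆ (f : (Fin n → ℂ) → ℂ) (_ : DifferentiableOn ℂ f Ω)
    (_ : bergNormSq Ω φ μ f ≠ 0) (_ : bergNormSq Ω φ μ f ≠ ⊤),
    ENNReal.ofReal (‖f z‖ ^ 2) / bergNormSq Ω φ μ f

/-- Extended logarithm `ℝ≥0∞ → EReal`, with `elog 0 = ⊥`. -/
def elog (x : ℝ≥0∞) : EReal :=
  if x = 0 then ⊥ else if x = ⊤ then ⊤ else ((Real.log x.toReal : ℝ) : EReal)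

/-- Directional Wirtinger derivative `∂_v f` at `x`. -/
def wder {E : Type*} [NormedAddCommGroup E] [NormedSpace ℂ E]
    (f : E → ℂ) (v x : E) : ℂ :=
  (1 / 2 : ℂ) * (fderiv ℝ f x v - Complex.I * fderiv ℝ f x (Complex.I • v))

/-- Directional conjugate Wirtinger derivative `∂̄_v f` at `x`. -/
def wderBar {E : Type*} [NormedAddCommGroup E] [NormedSpace ℂ E]
    (f : E → ℂ) (v x : E) : ℂ :=
  (1 / 2 : ℂ) * (fderiv ℝ f x v + Complex.I * fderiv ℝ f x (Complex.I • v))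

/-- The complex Hessian (Levi form) of `u` is positive semidefinite on `W`. -/
def LeviPSD {E : Type*} [NormedAddCommGroup E] [NormedSpace ℂ E]
    (W : Set E) (u : E → ℝ) : Prop :=
  ∀ x ∈ W, ∀ v : E, 0 ≤ (wder (fun y => wderBar (fun q => (u q : ℂ)) v y) v x).re

/-- Pseudoconvexity of an open set via a smooth psh exhaustion function. -/
def Pseudoconvex {n : ℕ} (Ω : Set (Fin n → ℂ)) : Prop :=
  IsOpen Ω ∧ ∃ u : (Fin n → ℂ) → ℝ, ContDiffOn ℝ (⊤ : ℕ∞) u Ω ∧ LeviPSD Ω u ∧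
    ∀ c : ℝ, IsCompact {z ∈ Ω | u z ≤ c}

/-- Plurisubharmonicity (with values in `EReal`): upper semicontinuity plus the
sub-mean-value inequality on complex lines, expressed via continuous majorants. -/
def PshOn {E : Type*} [NormedAddCommGroup E] [NormedSpace ℂ E]
    (D : Set E) (u : E → EReal) : Prop :=
  UpperSemicontinuousOn u D ∧
  ∀ a ∈ D, ∀ w : E, ∀ r : ℝ, 0 < r →
    (∀ τ : ℂ, ‖τ‖ ≤ r → a + τ • w ∈ D) →
    ∀ g : ℝ → ℝ, Continuous g →
      (∀ θ : ℝ, u (a + (((r : ℂ) * Complex.exp (θ * Complex.I)) • w)) ≤ ((g θ : ℝ) : EReal)) →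
      u a ≤ (((1 / (2 * Real.pi)) * ∫ θ in (0:ℝ)..(2 * Real.pi), g θ : ℝ) : EReal)

/-- The twisted curvature positivity condition `Ξ_{δ,η}(e^{−φ}) ≥ 0` on `U × Ω`. -/
def XiNonneg {m n : ℕ} (U : Set (Fin m → ℂ)) (Ω : Set (Fin n → ℂ))
    (φ : (Fin m → ℂ) × (Fin n → ℂ) → ℝ) (η : (Fin n → ℂ) → ℝ) (δ : ℝ) : Prop :=
  ∀ p ∈ U ×ˢ Ω, ∀ vt : Fin m → ℂ, ∀ vz : Fin n → ℂ,
    0 ≤ (wder (fun y => wderBar (fun q => (φ q : ℂ))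
            ((vt, 0) : (Fin m → ℂ) × (Fin n → ℂ)) y) ((vt, 0)) p
      + wder (fun y => wderBar (fun q => (φ q : ℂ))
            (((0 : Fin m → ℂ), vz)) y) ((vt, 0)) p
      + wder (fun y => wderBar (fun q => (φ q : ℂ))
            ((vt, 0)) y) (((0 : Fin m → ℂ), vz)) p
      + ((δ / (1 + δ) : ℝ) : ℂ) *
        (wder (fun y => wderBar (fun q => (φ q : ℂ))
            (((0 : Fin m → ℂ), vz)) y) (((0 : Fin m → ℂ), vz)) p
          + 2 * wder (fun y => wderBar (fun w => (η w : ℂ)) vz y) vz p.2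
          - ((1 + δ : ℝ) : ℂ) * (Complex.normSq (wder (fun w => (η w : ℂ)) vz p.2) : ℂ))).re
lemma volPres_smul {n : ℕ} (u : ℂ) (hu : ‖u‖ = 1) :
    MeasurePreserving (fun w : Fin n → ℂ => u • w) volume volume := by
  have h1 : MeasurePreserving (fun x : ℂ => u * x) volume volume := by
    have := (rotation ⟨u, by simpa [Submonoid.unitSphere] using hu⟩).measurePreserving
    exact this
  exact volume_preserving_pi (fun _ : Fin n => h1)

lemma enorm_sq_le_circle {n : ℕ} {Ω : Set (Fin n → ℂ)} (hΩ : IsOpen Ω) {f : (Fin n → ℂ) → ℂ}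
    (hf : DifferentiableOn ℂ f Ω) {a w : Fin n → ℂ} {r : ℝ} (hsub : Metric.closedBall a r ⊆ Ω)
    (hw : w ∈ Metric.closedBall (0 : Fin n → ℂ) r) :
    ‖f a‖ₑ ^ 2 ≤ ‖((2 * Real.pi)⁻¹ : ℝ)‖ₑ *
      ∫⁻ θ in Ioc 0 (2 * Real.pi), ‖f (a + circleMap 0 1 θ • w)‖ₑ ^ 2 := by
  have hmem : ∀ τ : ℂ, ‖τ‖ ≤ 1 → a + τ • w ∈ Ω := by
    intro τ hτ
    apply hsub
    rw [mem_closedBall_zero_iff] at hw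
    rw [Metric.mem_closedBall, dist_eq_norm, add_sub_cancel_left, norm_smul]
    calc ‖τ‖ * ‖w‖ ≤ 1 * ‖w‖ := by gcongr
      _ ≤ r := by simpa using hw
  set g : ℂ → ℂ := fun τ => f (a + τ • w) ^ 2 with hg
  have hd : ∀ τ : ℂ, ‖τ‖ ≤ 1 → DifferentiableAt ℂ g τ := by
    intro τ hτ
    have h1 : DifferentiableAt ℂ f (a + τ • w) :=
      (hf _ (hmem τ hτ)).differentiableAt (hΩ.mem_nhds (hmem τ hτ))
    have h2 : DifferentiableAt ℂ (fun τ : ℂ => a + τ • w) τ := by fun_prop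
    exact (DifferentiableAt.comp τ h1 h2).pow 2
  have hdc : DiffContOnCl ℂ g (Metric.ball 0 |(1 : ℝ)|) := by
    apply DifferentiableOn.diffContOnCl
    intro τ hτ
    refine (hd τ ?_).differentiableWithinAt
    have := Metric.closure_ball_subset_closedBall hτ
    simpa using this
  have havg := hdc.circleAverage
  rw [Real.circleAverage_def, intervalIntegral.integral_of_le (by positivity)] at havg
  have h0 : g 0 = f a ^ 2 := by simp [hg]
  rw [h0] at havg
  calc ‖f a‖ₑ ^ 2 = ‖f a ^ 2‖ₑ := by rw [enorm_pow]
    _ ≤ _ := by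
      rw [← havg, enorm_smul]
      gcongr
      refine (enorm_integral_le_lintegral_enorm _).trans (le_of_eq ?_)
      simp [hg, enorm_pow]

lemma mean_value_ineq {n : ℕ} {Ω : Set (Fin n → ℂ)} (hΩ : IsOpen Ω) {f : (Fin n → ℂ) → ℂ}
    (hf : DifferentiableOn ℂ f Ω) {a : Fin n → ℂ} {r : ℝ} (hsub : Metric.closedBall a r ⊆ Ω) :
    ‖f a‖ₑ ^ 2 * volume (Metric.closedBall (0 : Fin n → ℂ) r) ≤
      ∫⁻ w in Metric.closedBall a r, ‖f w‖ₑ ^ 2 := by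
  set G : (Fin n → ℂ) → ℝ≥0∞ := (Metric.closedBall a r).indicator (fun w => ‖f w‖ₑ ^ 2) with hG
  have hGm : Measurable G := by
    have hc : ContinuousOn (fun w => ‖f w‖ₑ ^ 2) (Metric.closedBall a r) := by
      have : ContinuousOn f (Metric.closedBall a r) := hf.continuousOn.mono hsub
      have h2 : ContinuousOn (fun w => ‖f w ^ 2‖ₑ) (Metric.closedBall a r) :=
        continuous_enorm.comp_continuousOn (this.pow 2)
      simpa [enorm_pow] using h2
    classical
    have := hc.measurable_piecewise (g := fun _ => (0 : ℝ≥0∞)) continuousOn_const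
      (measurableSet_closedBall)
    change Measurable ((Metric.closedBall a r).piecewise (fun w => ‖f w‖ₑ ^ 2) 0) at this
    rwa [piecewise_eq_indicator] at this
  set C := ‖((2 * Real.pi)⁻¹ : ℝ)‖ₑ with hC
  have hcirc : ∀ θ : ℝ, ‖circleMap 0 1 θ‖ = 1 := by intro θ; simp
  have hmeas : Measurable (fun p : (Fin n → ℂ) × ℝ => G (a + circleMap 0 1 p.2 • p.1)) := by
    apply hGm.comp
    have : Continuous (fun p : (Fin n → ℂ) × ℝ => a + circleMap 0 1 p.2 • p.1) := by
      have := continuous_circleMap 0 1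
      fun_prop
    exact this.measurable
  calc ‖f a‖ₑ ^ 2 * volume (Metric.closedBall (0 : Fin n → ℂ) r)
      = ∫⁻ w in Metric.closedBall (0 : Fin n → ℂ) r, ‖f a‖ₑ ^ 2 := by simp
    _ ≤ ∫⁻ w in Metric.closedBall (0 : Fin n → ℂ) r,
          C * ∫⁻ θ in Ioc 0 (2 * Real.pi), G (a + circleMap 0 1 θ • w) := by
        refine setLIntegral_mono' measurableSet_closedBall (fun w hw => ?_)
        refine (enorm_sq_le_circle hΩ hf hsub hw).trans ?_
        gcongr with θ
        rw [hG, indicator_of_mem]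
        rw [Metric.mem_closedBall, dist_eq_norm, add_sub_cancel_left, norm_smul, hcirc, one_mul]
        simpa using hw
    _ ≤ ∫⁻ w, C * ∫⁻ θ in Ioc 0 (2 * Real.pi), G (a + circleMap 0 1 θ • w) :=
        setLIntegral_le_lintegral _ _
    _ = C * ∫⁻ w, ∫⁻ θ in Ioc 0 (2 * Real.pi), G (a + circleMap 0 1 θ • w) := by
        rw [lintegral_const_mul]
        exact hmeas.lintegral_prod_right'
    _ = C * ∫⁻ θ in Ioc 0 (2 * Real.pi), ∫⁻ w, G (a + circleMap 0 1 θ • w) := by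
        rw [lintegral_lintegral_swap]
        exact hmeas.aemeasurable
    _ = C * ∫⁻ θ in Ioc 0 (2 * Real.pi), ∫⁻ w, G w := by
        congr 1
        apply lintegral_congr
        intro θ
        have h1 := (volPres_smul (n := n) _ (hcirc θ)).lintegral_comp
          (f := fun w => G (a + w)) (hGm.comp (measurable_const_add a))
        rw [h1, lintegral_add_left_eq_self]
    _ = ∫⁻ w, G w := by
        rw [lintegral_const, mul_comm _ (Measure.restrict _ _ _), ← mul_assoc]
        have : C * (volume.restrict (Ioc 0 (2 * Real.pi))) univ = 1 := by
          have hp : (0:ℝ) < 2 * Real.pi := by positivity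
          rw [Measure.restrict_apply_univ, Real.volume_Ioc, hC, sub_zero,
            Real.enorm_eq_ofReal (by positivity), ← ENNReal.ofReal_mul (by positivity),
            inv_mul_cancel₀ hp.ne', ENNReal.ofReal_one]
        rw [this, one_mul]
    _ = _ := by rw [hG, lintegral_indicator measurableSet_closedBall]

lemma normSq_integrand (a : ℂ) (t : ℝ) :
    ENNReal.ofReal (‖a‖ ^ 2 * Real.exp (-t)) = ‖a‖ₑ ^ 2 * ENNReal.ofReal (Real.exp (-t)) := by
  rw [ENNReal.ofReal_mul (by positivity), ENNReal.ofReal_pow (norm_nonneg _), ofReal_norm]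

lemma local_bound {n : ℕ} {Ω : Set (Fin n → ℂ)} (hΩ : IsOpen Ω)
    (μ : Measure (Fin n → ℂ)) 
    (hlb : ∀ K : Set (Fin n → ℂ), K ⊆ Ω → IsCompact K →
      ∃ c : ℝ, 0 < c ∧ ∀ᵐ z ∂volume, z ∈ K → ENNReal.ofReal c ≤ μ.rnDeriv volume z)
    (φ : (Fin n → ℂ) → ℝ) (hφm : Measurable φ)
    (hφb : ∀ K : Set (Fin n → ℂ), K ⊆ Ω → IsCompact K → ∃ M : ℝ, ∀ z ∈ K, |φ z| ≤ M)
    {a : Fin n → ℂ} (ha : a ∈ Ω) :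
    ∃ r : ℝ, 0 < r ∧ Metric.ball a r ⊆ Ω ∧ ∃ C : ℝ≥0∞, C ≠ ⊤ ∧
      ∀ x ∈ Metric.ball a r, ∀ f : (Fin n → ℂ) → ℂ, DifferentiableOn ℂ f Ω →
        ‖f x‖ₑ ^ 2 ≤ C * bergNormSq Ω φ μ f := by
  obtain ⟨ε, hε, hsub⟩ := Metric.nhds_basis_closedBall.mem_iff.1 (hΩ.mem_nhds ha)
  set K := Metric.closedBall a ε with hK
  have hKc : IsCompact K := isCompact_closedBall _ _
  obtain ⟨c, hc, hcK⟩ := hlb K hsub hKc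
  obtain ⟨M, hM⟩ := hφb K hsub hKc
  set V := volume (Metric.closedBall (0 : Fin n → ℂ) (ε / 2)) with hV
  have hV0 : V ≠ 0 := (Metric.measure_closedBall_pos volume _ (by positivity)).ne'
  have hVt : V ≠ ⊤ := measure_closedBall_lt_top.ne
  set D := ENNReal.ofReal (Real.exp (-M)) * ENNReal.ofReal c with hD
  have hD0 : D ≠ 0 := by
    rw [hD]
    have := Real.exp_pos (-M)
    simp [hc, this]
  have hDt : D ≠ ⊤ := by rw [hD]; finiteness
  refine ⟨ε / 2, by positivity, ?_, (D * V)⁻¹, ?_, ?_⟩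
  · exact (Metric.ball_subset_closedBall.trans (Metric.closedBall_subset_closedBall (by linarith))).trans hsub
  · simp [hD0, hV0]
  intro x hx f hf
  have hsubx : Metric.closedBall x (ε / 2) ⊆ K := by
    apply Metric.closedBall_subset_closedBall'
    rw [Metric.mem_ball] at hx
    linarith
  have h1 := mean_value_ineq hΩ hf (hsubx.trans hsub)
  have h2 : D * ∫⁻ w in K, ‖f w‖ₑ ^ 2 ≤ bergNormSq Ω φ μ f := by
    have hfa : AEMeasurable (fun w => ENNReal.ofReal (‖f w‖ ^ 2 * Real.exp (-(φ w)))) (volume.restrict K) := by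
      have h3 : AEMeasurable f (volume.restrict K) :=
        (hf.continuousOn.mono hsub).aemeasurable measurableSet_closedBall
      have := hφm.aemeasurable (μ := volume.restrict K)
      fun_prop
    calc D * ∫⁻ w in K, ‖f w‖ₑ ^ 2 = ∫⁻ w in K, D * ‖f w‖ₑ ^ 2 := by
            rw [lintegral_const_mul' _ _ hDt]
      _ ≤ ∫⁻ w in K, μ.rnDeriv volume w * ENNReal.ofReal (‖f w‖ ^ 2 * Real.exp (-(φ w))) := by
            refine lintegral_mono_ae ?_
            rw [ae_restrict_iff' measurableSet_closedBall]
            filter_upwards [hcK] with w hw hwK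
            rw [normSq_integrand, hD]
            have h5 : ENNReal.ofReal (Real.exp (-M)) ≤ ENNReal.ofReal (Real.exp (-(φ w))) := by
              gcongr
              exact (abs_le.1 (hM w hwK)).2
            calc ENNReal.ofReal (Real.exp (-M)) * ENNReal.ofReal c * ‖f w‖ₑ ^ 2
                = ENNReal.ofReal c * (‖f w‖ₑ ^ 2 * ENNReal.ofReal (Real.exp (-M))) := by ring
              _ ≤ _ := by gcongr; exact hw hwK
      _ = ∫⁻ w in K, ENNReal.ofReal (‖f w‖ ^ 2 * Real.exp (-(φ w)))
            ∂(volume.withDensity (μ.rnDeriv volume)) := by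
            rw [restrict_withDensity measurableSet_closedBall,
              lintegral_withDensity_eq_lintegral_mul₀
                (Measure.measurable_rnDeriv _ _).aemeasurable hfa]
            rfl
      _ ≤ ∫⁻ w in K, ENNReal.ofReal (‖f w‖ ^ 2 * Real.exp (-(φ w))) ∂μ := by
            refine lintegral_mono' (Measure.restrict_mono le_rfl (Measure.withDensity_rnDeriv_le _ _)) le_rfl
      _ ≤ _ := lintegral_mono_set hsub
  have h3 : D * V * ‖f x‖ₑ ^ 2 ≤ bergNormSq Ω φ μ f := by
    calc D * V * ‖f x‖ₑ ^ 2 = D * (‖f x‖ₑ ^ 2 * V) := by ring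
      _ ≤ D * ∫⁻ w in K, ‖f w‖ₑ ^ 2 := by
        gcongr
        exact h1.trans (lintegral_mono_set hsubx)
      _ ≤ _ := h2
  have h6 : D * V ≠ 0 := mul_ne_zero hD0 hV0
  have h7 : D * V ≠ ⊤ := ENNReal.mul_ne_top hDt hVt
  calc ‖f x‖ₑ ^ 2 = (D * V)⁻¹ * (D * V * ‖f x‖ₑ ^ 2) := by
        rw [← mul_assoc, ENNReal.inv_mul_cancel h6 h7, one_mul]
    _ ≤ _ := by gcongr

lemma holo_limit {n : ℕ} {Ω : Set (Fin n → ℂ)} (hΩ : IsOpen Ω) (F : ℕ → (Fin n → ℂ) → ℂ)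
    (hF : ∀ j, DifferentiableOn ℂ (F j) Ω)
    (hU : ∀ a ∈ Ω, ∃ r : ℝ, 0 < r ∧ Metric.ball a r ⊆ Ω ∧
      UniformCauchySeqOn F Filter.atTop (Metric.ball a r)) :
    ∃ f : (Fin n → ℂ) → ℂ, DifferentiableOn ℂ f Ω ∧
      ∀ x ∈ Ω, Filter.Tendsto (fun j => F j x) Filter.atTop (nhds (f x)) := by
  have hlim : ∀ x ∈ Ω, ∃ y, Filter.Tendsto (fun j => F j x) Filter.atTop (nhds y) := by
    intro x hx
    obtain ⟨r, hr, -, hu⟩ := hU x hx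
    exact cauchySeq_tendsto_of_complete (hu.cauchySeq (Metric.mem_ball_self hr))
  choose! f hf using hlim
  refine ⟨f, ?_, hf⟩
  intro a ha
  obtain ⟨r, hr, hsub, hu⟩ := hU a ha
  have hu' : UniformCauchySeqOn (fun j => fderiv ℂ (F j)) Filter.atTop (Metric.ball a (r / 2)) := by
    rw [Metric.uniformCauchySeqOn_iff] at hu ⊢
    intro ε hε
    obtain ⟨N, hN⟩ := hu (ε * r / 16) (by positivity)
    refine ⟨N, fun i hi j hj x hx => ?_⟩
    have hbx : Metric.ball x (r / 2) ⊆ Metric.ball a r := by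
      apply Metric.ball_subset_ball'
      rw [Metric.mem_ball] at hx
      linarith
    have hxm : x ∈ Metric.ball x (r / 2) := Metric.mem_ball_self (by positivity)
    have hxΩ : x ∈ Ω := hsub (hbx hxm)
    have hdi := (hF i x hxΩ).differentiableAt (hΩ.mem_nhds hxΩ)
    have hdj := (hF j x hxΩ).differentiableAt (hΩ.mem_nhds hxΩ)
    rw [dist_eq_norm, ← fderiv_sub hdi hdj]
    have hd : DifferentiableOn ℂ (F i - F j) (Metric.ball x (r / 2)) :=
      ((hF i).sub (hF j)).mono (hbx.trans hsub)
    have hm : MapsTo (F i - F j) (Metric.ball x (r / 2))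
        (Metric.closedBall ((F i - F j) x) (ε * r / 8)) := by
      intro y hy
      have h1 := hN i hi j hj y (hbx hy)
      have h2 := hN i hi j hj x (hbx hxm)
      rw [dist_eq_norm] at h1 h2
      rw [Metric.mem_closedBall, dist_eq_norm]
      simp only [Pi.sub_apply]
      refine (norm_sub_le _ _).trans ?_
      linarith
    refine (Complex.norm_fderiv_le_div_of_mapsTo_ball hd hm (by positivity)).trans_lt ?_
    rw [div_lt_iff₀ (by positivity)]
    nlinarith [mul_pos hε hr]
  have hlim' : ∀ x ∈ Metric.ball a (r / 2), ∃ y,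
      Filter.Tendsto (fun j => fderiv ℂ (F j) x) Filter.atTop (nhds y) := by
    intro x hx
    exact cauchySeq_tendsto_of_complete (hu'.cauchySeq hx)
  choose! g hg using hlim'
  have hb : Metric.ball a (r / 2) ⊆ Ω :=
    (Metric.ball_subset_ball (by linarith)).trans hsub
  have hfd : HasFDerivAt f (g a) a := by
    refine hasFDerivAt_of_tendstoUniformlyOn (l := Filter.atTop) (f := F)
      (f' := fun j => fderiv ℂ (F j)) Metric.isOpen_ball
      (hu'.tendstoUniformlyOn_of_tendsto hg) ?_ (fun x hx => hf x (hb hx))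
      (Metric.mem_ball_self (by positivity))
    intro j x hx
    exact ((hF j x (hb hx)).differentiableAt (hΩ.mem_nhds (hb hx))).hasFDerivAt
  exact hfd.differentiableAt.differentiableWithinAt

/-- Minimal squared norm among holomorphic functions with value one at `z`. -/
def bergMin {n : ℕ} (Ω : Set (Fin n → ℂ)) (φ : (Fin n → ℂ) → ℝ)
    (μ : Measure (Fin n → ℂ)) (z : Fin n → ℂ) : ℝ≥0∞ :=
  ⨅ (f : (Fin n → ℂ) → ℂ) (_ : DifferentiableOn ℂ f Ω) (_ : f z = 1), bergNormSq Ω φ μ f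

lemma bergNormSq_eq {n : ℕ} (Ω : Set (Fin n → ℂ)) (φ : (Fin n → ℂ) → ℝ)
    (μ : Measure (Fin n → ℂ)) (f : (Fin n → ℂ) → ℂ) :
    bergNormSq Ω φ μ f = ∫⁻ z in Ω, ‖f z‖ₑ ^ 2 * ENNReal.ofReal (Real.exp (-(φ z))) ∂μ := by
  simp only [bergNormSq, normSq_integrand]

lemma bergNormSq_smul {n : ℕ} (Ω : Set (Fin n → ℂ)) (φ : (Fin n → ℂ) → ℝ)
    (μ : Measure (Fin n → ℂ)) (f : (Fin n → ℂ) → ℂ) (c : ℂ) :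
    bergNormSq Ω φ μ (fun x => c * f x) = ‖c‖ₑ ^ 2 * bergNormSq Ω φ μ f := by
  rw [bergNormSq_eq, bergNormSq_eq, ← lintegral_const_mul' _ _ (by finiteness)]
  simp only [enorm_mul, mul_pow, mul_assoc]

lemma bergNormSq_mono {n : ℕ} {Ω : Set (Fin n → ℂ)} (hΩ : IsOpen Ω) {φ ψ : (Fin n → ℂ) → ℝ}
    (μ : Measure (Fin n → ℂ)) (f : (Fin n → ℂ) → ℂ) (h : ∀ w ∈ Ω, ψ w ≤ φ w) :
    bergNormSq Ω φ μ f ≤ bergNormSq Ω ψ μ f := by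
  refine setLIntegral_mono' hΩ.measurableSet (fun w hw => ?_)
  have := h w hw
  gcongr

lemma bergMin_mono {n : ℕ} {Ω : Set (Fin n → ℂ)} (hΩ : IsOpen Ω) {φ ψ : (Fin n → ℂ) → ℝ}
    (μ : Measure (Fin n → ℂ)) (z : Fin n → ℂ) (h : ∀ w ∈ Ω, ψ w ≤ φ w) :
    bergMin Ω φ μ z ≤ bergMin Ω ψ μ z := by
  unfold bergMin
  gcongr with f _ _
  exact bergNormSq_mono hΩ μ f h

lemma bergKernel_eq_inv {n : ℕ} {Ω : Set (Fin n → ℂ)} (φ : (Fin n → ℂ) → ℝ)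
    (μ : Measure (Fin n → ℂ)) (z : Fin n → ℂ)
    (hpos : ∀ f : (Fin n → ℂ) → ℂ, DifferentiableOn ℂ f Ω → f z = 1 → bergNormSq Ω φ μ f ≠ 0) :
    bergKernel Ω φ μ z = (bergMin Ω φ μ z)⁻¹ := by
  unfold bergKernel bergMin
  simp only [ENNReal.inv_iInf]
  apply le_antisymm
  · refine iSup_le fun f => iSup_le fun hf => iSup_le fun h0 => iSup_le fun ht => ?_
    by_cases hfz : f z = 0
    · simp [hfz]
    · refine le_iSup_of_le (fun x => (f z)⁻¹ * f x) (le_iSup_of_le (hf.const_mul _)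
        (le_iSup_of_le (inv_mul_cancel₀ hfz) ?_))
      have hz0 : ‖f z‖ₑ ^ 2 ≠ 0 := by simpa using hfz
      rw [bergNormSq_smul, ENNReal.ofReal_pow (norm_nonneg _), ofReal_norm,
        enorm_inv hfz, ← ENNReal.inv_pow, ENNReal.mul_inv, inv_inv, div_eq_mul_inv]
      · right; exact ht
      · right; exact h0
  · refine iSup_le fun f => iSup_le fun hf => iSup_le fun hfz => ?_
    by_cases ht : bergNormSq Ω φ μ f = ⊤
    · simp [ht]
    · refine le_iSup_of_le f (le_iSup_of_le hf (le_iSup_of_le (hpos f hf hfz)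
        (le_iSup_of_le ht ?_)))
      simp [hfz]

lemma parallelogram_enorm (a b : ℂ) :
    ‖a - b‖ₑ ^ 2 + 4 * ‖(1 / 2 : ℂ) * (a + b)‖ₑ ^ 2 = 2 * ‖a‖ₑ ^ 2 + 2 * ‖b‖ₑ ^ 2 := by
  have h := parallelogram_law_with_norm ℝ a b
  have key : ‖a - b‖ ^ 2 + 4 * ‖(1 / 2 : ℂ) * (a + b)‖ ^ 2 = 2 * ‖a‖ ^ 2 + 2 * ‖b‖ ^ 2 := by
    rw [norm_mul]
    have : ‖(1 / 2 : ℂ)‖ = 1 / 2 := by simp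
    rw [this]
    nlinarith
  have := congrArg ENNReal.ofReal key
  rw [ENNReal.ofReal_add (by positivity) (by positivity),
    ENNReal.ofReal_add (by positivity) (by positivity),
    ENNReal.ofReal_mul (by positivity), ENNReal.ofReal_mul (by positivity),
    ENNReal.ofReal_mul (by positivity)] at this
  simpa only [ENNReal.ofReal_pow (norm_nonneg _), ofReal_norm, ENNReal.ofReal_ofNat] using this

lemma bergNormSq_parallelogram {n : ℕ} {Ω : Set (Fin n → ℂ)} (hΩ : IsOpen Ω)
    {φ : (Fin n → ℂ) → ℝ} (hφm : Measurable φ) (μ : Measure (Fin n → ℂ))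
    {f g : (Fin n → ℂ) → ℂ} (hf : DifferentiableOn ℂ f Ω) (hg : DifferentiableOn ℂ g Ω) :
    bergNormSq Ω φ μ (f - g) + 4 * bergNormSq Ω φ μ (fun x => (1 / 2 : ℂ) * (f x + g x)) =
      2 * bergNormSq Ω φ μ f + 2 * bergNormSq Ω φ μ g := by
  have hfm : AEMeasurable f (μ.restrict Ω) := hf.continuousOn.aemeasurable hΩ.measurableSet
  have hgm : AEMeasurable g (μ.restrict Ω) := hg.continuousOn.aemeasurable hΩ.measurableSet
  have hφ' := hφm.aemeasurable (μ := μ.restrict Ω)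
  simp only [bergNormSq_eq, Pi.sub_apply]
  rw [← lintegral_const_mul' _ _ (by finiteness), ← lintegral_const_mul' _ _ (by finiteness),
    ← lintegral_const_mul' _ _ (by finiteness), ← lintegral_add_left' (by fun_prop),
    ← lintegral_add_left' (by fun_prop)]
  refine lintegral_congr fun x => ?_
  simp only [← mul_assoc, ← add_mul]
  rw [parallelogram_enorm]

theorem bergMin_tendsto {n : ℕ}
    (Ω : Set (Fin n → ℂ)) (hΩ : IsOpen Ω)
    (μ : Measure (Fin n → ℂ))
    (hlb : ∀ K : Set (Fin n → ℂ), K ⊆ Ω → IsCompact K →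
      ∃ c : ℝ, 0 < c ∧ ∀ᵐ z ∂volume, z ∈ K → ENNReal.ofReal c ≤ μ.rnDeriv volume z)
    (φ : (Fin n → ℂ) → ℝ)
    (Φ : ℕ → (Fin n → ℂ) → ℝ) (hΦm : ∀ j, Measurable (Φ j))
    (hΦb : ∀ j, ∀ K : Set (Fin n → ℂ), K ⊆ Ω → IsCompact K → ∃ M : ℝ, ∀ z ∈ K, |Φ j z| ≤ M)
    (hmono : ∀ w ∈ Ω, Antitone (fun j => Φ j w))
    (hlim : ∀ w ∈ Ω, Filter.Tendsto (fun j => Φ j w) Filter.atTop (nhds (φ w)))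
    (z : Fin n → ℂ) (hz : z ∈ Ω) :
    Filter.Tendsto (fun j => bergMin Ω (Φ j) μ z) Filter.atTop
      (nhds (bergMin Ω φ μ z)) := by
  have hmm : Monotone (fun j => bergMin Ω (Φ j) μ z) := fun i j hij =>
    bergMin_mono hΩ μ z (fun w hw => hmono w hw hij)
  have hle : ∀ j, bergMin Ω (Φ j) μ z ≤ bergMin Ω φ μ z := fun j =>
    bergMin_mono hΩ μ z (fun w hw => (hmono w hw).le_of_tendsto (hlim w hw) j)
  have ht := tendsto_atTop_iSup hmm
  set m := ⨆ j, bergMin Ω (Φ j) μ z with hm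
  suffices h : bergMin Ω φ μ z ≤ m by
    rwa [le_antisymm h (iSup_le hle)]
  by_cases hmt : m = ⊤
  · rw [hmt]; exact le_top
  have hmj : ∀ j, bergMin Ω (Φ j) μ z ≤ m := fun j => le_iSup (fun j => bergMin Ω (Φ j) μ z) j
  -- the error terms
  set e : ℕ → ℝ≥0∞ := fun j => ((j : ℝ≥0∞) + 1)⁻¹ with he
  have he0 : ∀ j, e j ≠ 0 := by intro j; simp [he]
  have hea : Antitone e := by
    intro i j hij
    simp only [he]
    gcongr
  have het : Filter.Tendsto e Filter.atTop (nhds 0) := by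
    have := (Filter.tendsto_add_atTop_iff_nat 1).2 ENNReal.tendsto_inv_nat_nhds_zero
    simpa [he] using this
  have hex : ∀ j, ∃ f : (Fin n → ℂ) → ℂ, DifferentiableOn ℂ f Ω ∧ f z = 1 ∧
      bergNormSq Ω (Φ j) μ f ≤ m + e j := by
    intro j
    have h1 : bergMin Ω (Φ j) μ z < m + e j :=
      (hmj j).trans_lt (ENNReal.lt_add_right hmt (he0 j))
    unfold bergMin at h1
    simp only [iInf_lt_iff] at h1
    obtain ⟨f, hf, hfz, h⟩ := h1
    exact ⟨f, hf, hfz, h.le⟩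
  choose F hF hFz hFn using hex
  set δ : ℕ → ℝ≥0∞ := fun i => (2 * (m + e i) + 2 * (m + e i)) - 4 * bergMin Ω (Φ i) μ z with hδ
  have hδt : Filter.Tendsto δ Filter.atTop (nhds 0) := by
    have h1 : Filter.Tendsto (fun i => m + e i) Filter.atTop (nhds m) := by
      simpa using het.const_add m
    have h2 : Filter.Tendsto (fun i => 2 * (m + e i)) Filter.atTop (nhds (2 * m)) :=
      ENNReal.Tendsto.const_mul h1 (Or.inr (by finiteness))
    have h3 : Filter.Tendsto (fun i => 4 * bergMin Ω (Φ i) μ z) Filter.atTop (nhds (4 * m)) :=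
      ENNReal.Tendsto.const_mul ht (Or.inr (by finiteness))
    have h4 := ENNReal.Tendsto.sub (h2.add h2) h3 (Or.inl (by finiteness))
    have h5 : 2 * m + 2 * m - 4 * m = 0 := by
      rw [← add_mul]; norm_num
    rwa [h5] at h4
  have hcau : ∀ i j, i ≤ j → bergNormSq Ω (Φ 0) μ (F i - F j) ≤ δ i := by
    intro i j hij
    refine (bergNormSq_mono hΩ μ _ (fun w hw => hmono w hw (Nat.zero_le i))).trans ?_
    have hp := bergNormSq_parallelogram hΩ (hΦm i) μ (hF i) (hF j)
    have h1 : bergMin Ω (Φ i) μ z ≤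
        bergNormSq Ω (Φ i) μ (fun x => (1 / 2 : ℂ) * (F i x + F j x)) := by
      refine iInf_le_of_le _ (iInf_le_of_le (((hF i).add (hF j)).const_mul _) (iInf_le_of_le ?_ le_rfl))
      simp only [Pi.add_apply, hFz]; norm_num
    have h2 : bergNormSq Ω (Φ i) μ (F j) ≤ m + e i :=
      (bergNormSq_mono hΩ μ _ (fun w hw => hmono w hw hij)).trans
        ((hFn j).trans (by gcongr; exact hea hij))
    have hfin : 4 * bergMin Ω (Φ i) μ z ≠ ⊤ :=
      ENNReal.mul_ne_top (by finiteness) (ne_top_of_le_ne_top hmt (hmj i))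
    refine ENNReal.le_sub_of_add_le_right hfin ?_
    calc _ ≤ bergNormSq Ω (Φ i) μ (F i - F j) +
          4 * bergNormSq Ω (Φ i) μ (fun x => (1 / 2 : ℂ) * (F i x + F j x)) := by gcongr
      _ = _ := hp
      _ ≤ _ := by gcongr; exact hFn i
  obtain ⟨f, hf, hfl⟩ := holo_limit hΩ F hF (by
    intro a ha
    obtain ⟨r, hr, hsub, C, hC, hb⟩ := local_bound hΩ μ hlb (Φ 0) (hΦm 0) (hΦb 0) ha
    refine ⟨r, hr, hsub, ?_⟩
    have hCδ : Filter.Tendsto (fun i => C * δ i) Filter.atTop (nhds 0) := by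
      simpa using ENNReal.Tendsto.const_mul hδt (Or.inr hC)
    rw [Metric.uniformCauchySeqOn_iff]
    intro ε hε
    have hev := (hCδ.eventually (gt_mem_nhds
      (show (0 : ℝ≥0∞) < ENNReal.ofReal ((ε / 2) ^ 2) by positivity))).exists
    obtain ⟨N, hN⟩ := hev
    have key : ∀ j ≥ N, ∀ x ∈ Metric.ball a r, ‖F N x - F j x‖ < ε / 2 := by
      intro j hj x hx
      have h1 := hb x hx (F N - F j) ((hF N).sub (hF j))
      have h2 : ‖(F N - F j) x‖ₑ ^ 2 < ENNReal.ofReal ((ε / 2) ^ 2) :=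
        (h1.trans (by gcongr; exact hcau N j hj)).trans_lt hN
      rw [← ofReal_norm, ← ENNReal.ofReal_pow (norm_nonneg _),
        ENNReal.ofReal_lt_ofReal_iff (by positivity)] at h2
      exact lt_of_pow_lt_pow_left₀ 2 (by positivity) h2
    refine ⟨N, fun i hi j hj x hx => ?_⟩
    have h1 := key i hi x hx
    have h2 := key j hj x hx
    rw [← dist_eq_norm] at h1 h2
    have h3 := dist_triangle_left (F i x) (F j x) (F N x)
    linarith)
  have hfz : f z = 1 := by
    have := hfl z hz
    simp only [hFz] at this
    exact (tendsto_nhds_unique this tendsto_const_nhds)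
  have hFatou : bergNormSq Ω φ μ f ≤ m := by
    calc bergNormSq Ω φ μ f
        = ∫⁻ w in Ω, Filter.liminf (fun j =>
            ENNReal.ofReal (‖F j w‖ ^ 2 * Real.exp (-(Φ j w)))) Filter.atTop ∂μ := by
          refine setLIntegral_congr_fun hΩ.measurableSet (fun w hw => ?_)
          have h1 : Filter.Tendsto (fun j => ENNReal.ofReal (‖F j w‖ ^ 2 * Real.exp (-(Φ j w))))
              Filter.atTop (nhds (ENNReal.ofReal (‖f w‖ ^ 2 * Real.exp (-(φ w))))) := by
            refine ENNReal.tendsto_ofReal (((hfl w hw).norm.pow 2).mul ?_)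
            exact (Real.continuous_exp.tendsto _).comp (hlim w hw).neg
          exact h1.liminf_eq.symm
      _ ≤ Filter.liminf (fun j => bergNormSq Ω (Φ j) μ (F j)) Filter.atTop := by
          refine lintegral_liminf_le' (fun j => ?_)
          have hfm : AEMeasurable (F j) (μ.restrict Ω) :=
            (hF j).continuousOn.aemeasurable hΩ.measurableSet
          have := (hΦm j).aemeasurable (μ := μ.restrict Ω)
          fun_prop
      _ ≤ Filter.liminf (fun j => m + e j) Filter.atTop :=
          Filter.liminf_le_liminf (Filter.Eventually.of_forall hFn)
      _ = m := by
          have h1 : Filter.Tendsto (fun i => m + e i) Filter.atTop (nhds m) := by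
            simpa using het.const_add m
          exact h1.liminf_eq
  unfold bergMin
  exact iInf_le_of_le f (iInf_le_of_le hf (iInf_le_of_le hfz hFatou))

/-- **Ramadanov-type theorem for metrics increasing to a limit metric**: if the weights
`Φ j` decrease pointwise to `φ` (so the metrics `e^{−Φ j}` increase to `e^{−φ}`), the
Bergman kernels decrease to the Bergman kernel of the limit. -/
theorem bergKernel_increasing_metrics {n : ℕ}
    (Ω : Set (Fin n → ℂ)) (hΩ : IsOpen Ω) (hb : Bornology.IsBounded Ω)
    (μ : Measure (Fin n → ℂ)) (hac : μ ≪ volume)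
    (hlb : ∀ K : Set (Fin n → ℂ), K ⊆ Ω → IsCompact K →
      ∃ c : ℝ, 0 < c ∧ ∀ᵐ z ∂volume, z ∈ K → ENNReal.ofReal c ≤ μ.rnDeriv volume z)
    (φ : (Fin n → ℂ) → ℝ) (hφm : Measurable φ)
    (hφb : ∀ K : Set (Fin n → ℂ), K ⊆ Ω → IsCompact K → ∃ M : ℝ, ∀ z ∈ K, |φ z| ≤ M)
    (Φ : ℕ → (Fin n → ℂ) → ℝ) (hΦm : ∀ j, Measurable (Φ j))
    (hΦb : ∀ j, ∀ K : Set (Fin n → ℂ), K ⊆ Ω → IsCompact K → ∃ M : ℝ, ∀ z ∈ K, |Φ j z| ≤ M)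
    (hmono : ∀ w ∈ Ω, Antitone (fun j => Φ j w))
    (hlim : ∀ w ∈ Ω, Filter.Tendsto (fun j => Φ j w) Filter.atTop (nhds (φ w)))
    (z : Fin n → ℂ) (hz : z ∈ Ω) :
    Antitone (fun j => bergKernel Ω (Φ j) μ z) ∧
    Filter.Tendsto (fun j => bergKernel Ω (Φ j) μ z) Filter.atTop
      (nhds (bergKernel Ω φ μ z)) := by

  have hpos : ∀ ψ : (Fin n → ℂ) → ℝ, Measurable ψ →
      (∀ K : Set (Fin n → ℂ), K ⊆ Ω → IsCompact K → ∃ M : ℝ, ∀ z ∈ K, |ψ z| ≤ M) →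
      bergKernel Ω ψ μ z = (bergMin Ω ψ μ z)⁻¹ := by
    intro ψ hψm hψb
    refine bergKernel_eq_inv ψ μ z (fun f hf hfz h0 => ?_)
    obtain ⟨r, hr, -, C, -, hC⟩ := local_bound hΩ μ hlb ψ hψm hψb hz
    have := hC z (Metric.mem_ball_self hr) f hf
    rw [h0, hfz] at this
    simp at this
  simp only [hpos φ hφm hφb, fun j => hpos (Φ j) (hΦm j) (hΦb j)]
  refine ⟨fun i j hij => ?_, ?_⟩
  · exact ENNReal.inv_le_inv.2 (bergMin_mono hΩ μ z (fun w hw => hmono w hw hij))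
  · exact (bergMin_tendsto Ω hΩ μ hlb φ Φ hΦm hΦb hmono hlim z hz).inv
end
end

section
/- Let W ⊆ ℂ^m × ℂ^n be open, let ρ : W → ℝ be a smooth function whose complex Hessian (in all m+n complex variables) is positive semidefinite at every point of W, set X := {(t,z) ∈ W : ρ(t,z) < 0}, and assume X is bounded with its closure contained in W. Let φ : W → ℝ be smooth. For t ∈ ℂ^m write X_t := {z ∈ ℂ^n : (t,z) ∈ X}, and let K_t denote the diagonal Bergman kernel of H²(X_t, φ(t,·)) (with respect to Lebesgue measure on X_t). Then for every fixed z ∈ ℂ^n, the function t ↦ K_t(z) is upper semicontinuous on the open set {t ∈ ℂ^m : z ∈ X_t}. -/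
open MeasureTheory Set
open scoped ENNReal ComplexOrder

noncomputable section

open Filter Topology Metric in
/-- Uniform second-order Taylor estimate. -/
lemma taylor_bound {E : Type*} [NormedAddCommGroup E] [NormedSpace ℂ E] {f : E → ℂ} {w : E}
    {R C : ℝ} (hR : 0 < R) (hd : DifferentiableOn ℂ f (ball w R))
    (hC : ∀ y ∈ ball w R, ‖f y‖ ≤ C) :
    ‖fderiv ℂ f w‖ ≤ 2 * C / R ∧
    ∀ y ∈ ball w R, ‖f y - f w - fderiv ℂ f w (y - w)‖ ≤ 4 * C * (‖y - w‖ / R) ^ 2 := by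
  have hw : w ∈ ball w R := mem_ball_self hR
  have h1 : ‖fderiv ℂ f w‖ ≤ 2 * C / R := by
    refine Complex.norm_fderiv_le_div_of_mapsTo_ball hd ?_ hR
    intro y hy
    rw [mem_closedBall, dist_eq_norm]
    have := norm_sub_le (f y) (f w)
    linarith [hC y hy, hC w hw]
  refine ⟨h1, fun y hy => ?_⟩
  have hda : DifferentiableAt ℂ f w := hd.differentiableAt (isOpen_ball.mem_nhds hw)
  have := Complex.dist_le_mul_div_pow_of_mapsTo_ball_of_isLittleO
    (f := fun y => f y - fderiv ℂ f w (y - w)) (c := w) (z := y) (R₁ := R) (R₂ := 4 * C) (n := 1)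
    (hd.sub (by fun_prop)) ?_ ?_ hy
  · simpa [dist_eq_norm, sub_right_comm] using this
  · intro y hy
    simp only [sub_self, map_zero, sub_zero, mem_closedBall, dist_eq_norm]
    have e1 := norm_sub_le (f y - fderiv ℂ f w (y - w)) (f w)
    have e2 := norm_sub_le (f y) (fderiv ℂ f w (y - w))
    have e3 : ‖fderiv ℂ f w (y - w)‖ ≤ 2 * C / R * R := by
      refine (ContinuousLinearMap.le_opNorm _ _).trans ?_
      have : ‖y - w‖ ≤ R := by rw [← dist_eq_norm]; exact (mem_ball.1 hy).le
      gcongr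
      exact (norm_nonneg _).trans h1
    rw [div_mul_cancel₀ _ hR.ne'] at e3
    linarith [hC y hy, hC w hw]
  · have := hda.hasFDerivAt.isLittleO
    simp only [sub_self, map_zero, sub_zero, pow_one]
    refine Asymptotics.IsLittleO.norm_right ?_
    refine this.congr_left fun y => by ring

open Filter Topology Metric in
/-- Montel along an ultrafilter. -/
lemma montel_ultra {ι : Type*} {E : Type*} [NormedAddCommGroup E] [NormedSpace ℂ E]
    [FiniteDimensional ℂ E] (U : Ultrafilter ι) (Ω : Set E) (F : ι → E → ℂ)
    (hF : ∀ w ∈ Ω, ∃ R > 0, ∃ C : ℝ, ∀ᶠ i in (U : Filter ι),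
      DifferentiableOn ℂ (F i) (ball w R) ∧ ∀ y ∈ ball w R, ‖F i y‖ ≤ C) :
    ∃ f : E → ℂ, ∀ w ∈ Ω, (Ω ∈ 𝓝 w → DifferentiableAt ℂ f w) ∧
      Tendsto (fun p : ι × E => F p.1 p.2) ((U : Filter ι) ×ˢ 𝓝 w) (𝓝 (f w)) := by
  have : ProperSpace (E →L[ℂ] ℂ) := FiniteDimensional.proper ℂ _
  have ex : ∀ w ∈ Ω, ∃ a : ℂ, Tendsto (fun i => F i w) U (𝓝 a) := by
    intro w hw
    obtain ⟨R, hR, C, h⟩ := hF w hw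
    have := (isCompact_closedBall (0:ℂ) C).ultrafilter_le_nhds (U.map fun i => F i w) (by
      rw [le_principal_iff]
      change ∀ᶠ i in (U : Filter ι), F i w ∈ closedBall (0:ℂ) C
      filter_upwards [h] with i hi
      simpa using hi.2 w (mem_ball_self hR))
    obtain ⟨a, -, ha⟩ := this
    exact ⟨a, ha⟩
  choose! f hf using ex
  refine ⟨f, fun w hw => ?_⟩
  obtain ⟨R, hR, C, h⟩ := hF w hw
  have hb : ∀ᶠ i in (U : Filter ι), ‖fderiv ℂ (F i) w‖ ≤ 2 * C / R ∧
    ∀ y ∈ ball w R, ‖F i y - F i w - fderiv ℂ (F i) w (y - w)‖ ≤ 4 * C * (‖y - w‖ / R) ^ 2 := by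
    filter_upwards [h] with i hi using taylor_bound hR hi.1 hi.2
  constructor
  · intro hΩ
    obtain ⟨L, -, hL⟩ := (isCompact_closedBall (0 : E →L[ℂ] ℂ) (2 * C / R)).ultrafilter_le_nhds
      (U.map fun i => fderiv ℂ (F i) w) (by
        rw [le_principal_iff]
        change ∀ᶠ i in (U : Filter ι), fderiv ℂ (F i) w ∈ closedBall (0 : E →L[ℂ] ℂ) (2 * C / R)
        filter_upwards [hb] with i hi
        simpa using hi.1)
    have hL' : Tendsto (fun i => fderiv ℂ (F i) w) U (𝓝 L) := hL
    refine HasFDerivAt.differentiableAt (f' := L) (.of_isLittleO ?_)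
    have hO : (fun y => f y - f w - L (y - w)) =O[𝓝 w] fun y => ‖y - w‖ ^ 2 := by
      refine Asymptotics.IsBigO.of_bound (4 * C / R ^ 2) ?_
      filter_upwards [hΩ, ball_mem_nhds w hR] with y hy hyR
      have ht : Tendsto (fun i => F i y - F i w - fderiv ℂ (F i) w (y - w)) U
          (𝓝 (f y - f w - L (y - w))) :=
        ((hf y hy).sub (hf w hw)).sub (((ContinuousLinearMap.apply ℂ ℂ (y - w)).continuous.tendsto
          L).comp hL')
      have := le_of_tendsto ht.norm (hb.mono fun i hi => hi.2 y hyR)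
      refine this.trans (le_of_eq ?_)
      rw [norm_pow, norm_norm]; ring
    refine hO.trans_isLittleO ?_
    have h0 : (fun h : E => ‖h‖ ^ 2) =o[𝓝 0] fun h => h := by
      simpa using Asymptotics.isLittleO_norm_pow_id (E' := E) one_lt_two
    exact h0.comp_tendsto (k := fun y => y - w) (by
      have : Continuous fun y : E => y - w := by fun_prop
      simpa using this.tendsto w)
  · have h1 : Tendsto (fun p : ι × E => F p.1 w) ((U : Filter ι) ×ˢ 𝓝 w) (𝓝 (f w)) :=
      (hf w hw).comp tendsto_fst
    have h2 : Tendsto (fun p : ι × E => F p.1 p.2 - F p.1 w) ((U : Filter ι) ×ˢ 𝓝 w) (𝓝 0) := by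
      have hlim : Tendsto (fun p : ι × E => 2 * C / R * ‖p.2 - w‖ + 4 * C * (‖p.2 - w‖ / R) ^ 2)
          ((U : Filter ι) ×ˢ 𝓝 w) (𝓝 0) := by
        have : Tendsto (fun y : E => 2 * C / R * ‖y - w‖ + 4 * C * (‖y - w‖ / R) ^ 2)
          (𝓝 w) (𝓝 (2 * C / R * ‖w - w‖ + 4 * C * (‖w - w‖ / R) ^ 2)) := by
          apply Continuous.tendsto; fun_prop
        simp only [sub_self, norm_zero] at this
        have h3 := this.comp (tendsto_snd (f := (U : Filter ι)))
        simpa [Function.comp_def] using h3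
      refine squeeze_zero_norm' ?_ hlim
      filter_upwards [hb.prod_mk (ball_mem_nhds w hR)] with p hp
      obtain ⟨⟨ha, hb⟩, hy⟩ := hp
      have e := hb p.2 hy
      have e2 : ‖fderiv ℂ (F p.1) w (p.2 - w)‖ ≤ 2 * C / R * ‖p.2 - w‖ :=
        (ContinuousLinearMap.le_opNorm _ _).trans (by gcongr)
      have e3 := norm_add_le (F p.1 p.2 - F p.1 w - fderiv ℂ (F p.1) w (p.2 - w))
        (fderiv ℂ (F p.1) w (p.2 - w))
      rw [sub_add_cancel] at e3
      linarith
    simpa using h2.add h1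

open Metric in
lemma volume_preserving_unit {n : ℕ} (c : ℂ) (hc : ‖c‖ = 1) :
    MeasurePreserving (fun v : Fin n → ℂ => c • v) volume volume := by
  have : MeasurePreserving (fun z : ℂ => c * z) volume volume := by
    have := (rotation ⟨c, by simpa [Submonoid.unitSphere] using hc⟩).measurePreserving
    exact this
  exact volume_preserving_pi (fun _ : Fin n => this)

open Metric in
lemma line_mean {n : ℕ} {f : (Fin n → ℂ) → ℂ} {w : Fin n → ℂ} {R : ℝ}
    (hd : DifferentiableOn ℂ f (closedBall w R)) (ζ : Fin n → ℂ) (hζ : ζ ∈ closedBall 0 R) :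
    ENNReal.ofReal (2 * Real.pi) * ‖f w‖ₑ ^ 2 ≤
      ∫⁻ θ in Ioc 0 (2 * Real.pi), ‖f (w + circleMap 0 1 θ • ζ)‖ₑ ^ 2 := by
  have hg : DifferentiableOn ℂ (fun s : ℂ => f (w + s • ζ) ^ 2) (closedBall 0 1) := by
    refine DifferentiableOn.pow (hd.comp (f := fun s : ℂ => w + s • ζ) (by fun_prop) ?_) 2
    intro s hs
    simp only [mem_closedBall, dist_zero_right, dist_self_add_left, norm_smul] at *
    nlinarith [norm_nonneg ζ, norm_nonneg s]
  have hm := DiffContOnCl.circleAverage (c := 0) (R := 1) (by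
    rw [abs_one]; exact hg.diffContOnCl_ball subset_rfl)
  rw [Real.circleAverage_def] at hm
  have hpi : (0:ℝ) < 2 * Real.pi := by positivity
  rw [inv_smul_eq_iff₀ hpi.ne', intervalIntegral.integral_of_le hpi.le] at hm
  have := enorm_integral_le_lintegral_enorm (μ := volume.restrict (Ioc 0 (2 * Real.pi)))
    (fun θ : ℝ => f (w + circleMap 0 1 θ • ζ) ^ 2)
  rw [hm] at this
  simp only [zero_smul, add_zero, enorm_smul, enorm_pow] at this
  rwa [Real.enorm_eq_ofReal hpi.le] at this

open Metric in
lemma sub_mean {n : ℕ} {f : (Fin n → ℂ) → ℂ} {w : Fin n → ℂ} {R : ℝ}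
    (hd : DifferentiableOn ℂ f (closedBall w R)) :
    ‖f w‖ₑ ^ 2 * volume (closedBall (0 : Fin n → ℂ) R) ≤ ∫⁻ y in closedBall w R, ‖f y‖ₑ ^ 2 := by
  set B := closedBall (0 : Fin n → ℂ) R with hB
  have hpi : (0:ℝ) < 2 * Real.pi := by positivity
  have hBm : MeasurableSet B := measurableSet_closedBall
  have htr : ∫⁻ ζ in B, ‖f (w + ζ)‖ₑ ^ 2 = ∫⁻ y in closedBall w R, ‖f y‖ₑ ^ 2 := by
    have := (measurePreserving_add_left (volume : Measure (Fin n → ℂ)) w).setLIntegral_comp_preimage_emb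
      (MeasurableEquiv.addLeft w).measurableEmbedding (fun y => ‖f y‖ₑ ^ 2) (closedBall w R)
    rw [← this]
    congr 2
    ext; simp [hB]
  have hrot : ∀ θ : ℝ, ∫⁻ ζ in B, ‖f (w + circleMap 0 1 θ • ζ)‖ₑ ^ 2 =
      ∫⁻ ζ in B, ‖f (w + ζ)‖ₑ ^ 2 := by
    intro θ
    have hn : ‖circleMap 0 1 θ‖ = 1 := by simp
    have hne : circleMap 0 1 θ ≠ 0 := by rw [← norm_ne_zero_iff, hn]; norm_num
    have := (volume_preserving_unit (n := n) _ hn).setLIntegral_comp_preimage_emb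
      (Homeomorph.smulOfNeZero _ hne).measurableEmbedding
      (fun y => ‖f (w + y)‖ₑ ^ 2) B
    rw [← this]
    congr 2
    ext; simp [hB, norm_smul]
  have key : ∫⁻ ζ in B, ENNReal.ofReal (2 * Real.pi) * ‖f w‖ₑ ^ 2 ≤
      ∫⁻ ζ in B, ∫⁻ θ in Ioc 0 (2 * Real.pi), ‖f (w + circleMap 0 1 θ • ζ)‖ₑ ^ 2 :=
    setLIntegral_mono' hBm fun ζ hζ => line_mean hd ζ hζ
  rw [lintegral_lintegral_swap] at key
  · simp only [hrot, htr, setLIntegral_const, Real.volume_Ioc, sub_zero] at key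
    rw [mul_comm (∫⁻ y in closedBall w R, ‖f y‖ₑ ^ 2), mul_assoc] at key
    exact (ENNReal.mul_le_mul_iff_right (by simpa using hpi) ENNReal.ofReal_ne_top).1 key
  · rw [Measure.prod_restrict]
    have hc : ContinuousOn (fun p : (Fin n → ℂ) × ℝ => f (w + circleMap 0 1 p.2 • p.1))
        (B ×ˢ Ioc 0 (2 * Real.pi)) := by
      refine hd.continuousOn.comp (f := fun p : (Fin n → ℂ) × ℝ => w + circleMap 0 1 p.2 • p.1)
        ?_ ?_
      · have := (continuous_circleMap 0 1)
        fun_prop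
      · rintro ⟨ζ, θ⟩ ⟨h1, -⟩
        simpa [hB, norm_smul] using h1
    exact ((hc.aemeasurable (hBm.prod measurableSet_Ioc)).enorm).pow_const 2

open Metric in
lemma point_bound {n : ℕ} {f : (Fin n → ℂ) → ℂ} {Ω : Set (Fin n → ℂ)} {φ : (Fin n → ℂ) → ℝ}
    (hd : DifferentiableOn ℂ f Ω) {w : Fin n → ℂ} {R M : ℝ} (hB : closedBall w R ⊆ Ω)
    (hM : ∀ y ∈ closedBall w R, φ y ≤ M) :
    ‖f w‖ₑ ^ 2 * volume (closedBall (0 : Fin n → ℂ) R) ≤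
      ENNReal.ofReal (Real.exp M) * bergNormSq Ω φ volume f := by
  refine (sub_mean (hd.mono hB)).trans ?_
  unfold bergNormSq
  rw [← lintegral_const_mul' _ _ ENNReal.ofReal_ne_top]
  refine (setLIntegral_mono' measurableSet_closedBall fun y hy => ?_).trans
    (lintegral_mono_set hB)
  rw [← ENNReal.ofReal_mul (Real.exp_nonneg _), ← ofReal_norm_eq_enorm,
    ← ENNReal.ofReal_pow (norm_nonneg _)]
  apply ENNReal.ofReal_le_ofReal
  have h1 : 1 ≤ Real.exp M * Real.exp (-(φ y)) := by
    rw [← Real.exp_add, Real.one_le_exp_iff]; linarith [hM y hy]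
  nlinarith [sq_nonneg ‖f y‖]

lemma bergNormSq_mul {n : ℕ} (Ω : Set (Fin n → ℂ)) (φ : (Fin n → ℂ) → ℝ)
    (f : (Fin n → ℂ) → ℂ) (a : ℝ) :
    bergNormSq Ω φ volume (fun y => (a : ℂ) * f y) =
      ENNReal.ofReal (a ^ 2) * bergNormSq Ω φ volume f := by
  unfold bergNormSq
  rw [← lintegral_const_mul' _ _ ENNReal.ofReal_ne_top]
  congr 1; ext y
  rw [← ENNReal.ofReal_mul (sq_nonneg _)]
  congr 1
  rw [norm_mul, mul_pow, Complex.norm_real, Real.norm_eq_abs, sq_abs]; ring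

lemma exists_normalized {n : ℕ} {Ω : Set (Fin n → ℂ)} {φ : (Fin n → ℂ) → ℝ} {z : Fin n → ℂ}
    {c : ℝ≥0∞} (hc : c < bergKernel Ω φ volume z) :
    ∃ f : (Fin n → ℂ) → ℂ, DifferentiableOn ℂ f Ω ∧ bergNormSq Ω φ volume f ≤ 1 ∧
      c ≤ ENNReal.ofReal (‖f z‖ ^ 2) := by
  simp only [bergKernel, lt_iSup_iff] at hc
  obtain ⟨f, hd, h0, ht, hlt⟩ := hc
  set N := bergNormSq Ω φ volume f with hN
  have hpos : 0 < N.toReal := ENNReal.toReal_pos h0 ht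
  have ha : ((Real.sqrt N.toReal)⁻¹) ^ 2 = N.toReal⁻¹ := by
    rw [inv_pow, Real.sq_sqrt hpos.le]
  have hb : ENNReal.ofReal (N.toReal⁻¹) = N⁻¹ := by
    rw [ENNReal.ofReal_inv_of_pos hpos, ENNReal.ofReal_toReal ht]
  refine ⟨fun y => (((Real.sqrt N.toReal)⁻¹ : ℝ) : ℂ) * f y, hd.const_mul _, ?_, ?_⟩
  · rw [bergNormSq_mul, ha, hb, ← hN, ENNReal.inv_mul_cancel h0 ht]
  · refine hlt.le.trans (le_of_eq ?_)
    rw [norm_mul, mul_pow, Complex.norm_real, Real.norm_eq_abs, sq_abs, ha,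
      ENNReal.ofReal_mul (by positivity), hb, ENNReal.div_eq_inv_mul]

open Filter Topology Metric in
lemma usc_aux {m n : ℕ} (X : Set ((Fin m → ℂ) × (Fin n → ℂ))) (hX : IsOpen X)
    (φ : (Fin m → ℂ) × (Fin n → ℂ) → ℝ) (hφ : ContinuousOn φ X) (z : Fin n → ℂ) :
    UpperSemicontinuousOn
      (fun t => bergKernel {w : Fin n → ℂ | (t, w) ∈ X} (fun w => φ (t, w)) volume z)
      {t : Fin m → ℂ | (t, z) ∈ X} := by
  intro t₀ ht₀ c hc
  by_contra hcon
  have hfr := not_eventually.1 hcon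
  obtain ⟨c', hc0, hc'⟩ := exists_between hc
  rw [Filter.Frequently, ← Filter.Frequently, frequently_iff_neBot] at hfr
  set l := 𝓝[{t : Fin m → ℂ | (t, z) ∈ X}] t₀ ⊓ 𝓟 {t | ¬ bergKernel {w : Fin n → ℂ | (t, w) ∈ X}
    (fun w => φ (t, w)) volume z < c} with hl
  have hne : l.NeBot := hfr
  set U := Ultrafilter.of l with hUdef
  have hUl : (U : Filter _) ≤ l := Ultrafilter.of_le l
  have hU0 : (U : Filter _) ≤ 𝓝 t₀ := hUl.trans (inf_le_left.trans nhdsWithin_le_nhds)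
  have hex : ∀ t, ∃ f : (Fin n → ℂ) → ℂ, ¬ bergKernel {w : Fin n → ℂ | (t, w) ∈ X}
      (fun w => φ (t, w)) volume z < c → DifferentiableOn ℂ f {w : Fin n → ℂ | (t, w) ∈ X} ∧
      bergNormSq {w : Fin n → ℂ | (t, w) ∈ X} (fun w => φ (t, w)) volume f ≤ 1 ∧
      c' ≤ ENNReal.ofReal (‖f z‖ ^ 2) := by
    intro t
    by_cases h : bergKernel {w : Fin n → ℂ | (t, w) ∈ X} (fun w => φ (t, w)) volume z < c
    · exact ⟨0, fun h' => absurd h h'⟩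
    · obtain ⟨f, hf⟩ := exists_normalized (hc'.trans_le (not_lt.1 h))
      exact ⟨f, fun _ => hf⟩
  choose F hF using hex
  have hFU : ∀ᶠ t in (U : Filter _), DifferentiableOn ℂ (F t) {w : Fin n → ℂ | (t, w) ∈ X} ∧
      bergNormSq {w : Fin n → ℂ | (t, w) ∈ X} (fun w => φ (t, w)) volume (F t) ≤ 1 ∧
      c' ≤ ENNReal.ofReal (‖F t z‖ ^ 2) := by
    have : ∀ᶠ t in (U : Filter _), ¬ bergKernel {w : Fin n → ℂ | (t, w) ∈ X}
      (fun w => φ (t, w)) volume z < c := (hUl.trans inf_le_right) (mem_principal_self _)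
    filter_upwards [this] with t ht using hF t ht
  clear_value U
  have hΩo : IsOpen {w : Fin n → ℂ | (t₀, w) ∈ X} :=
    hX.preimage (Continuous.prodMk_right t₀)
  -- local geometry
  have hgeo : ∀ w, (t₀, w) ∈ X → ∃ R > 0, ∃ M : ℝ, ∀ t ∈ ball t₀ R, ∀ y ∈ ball w R,
      ∀ y' ∈ closedBall y R, (t, y') ∈ X ∧ φ (t, y') ≤ M := by
    intro w hw
    have h1 : ∀ᶠ p in 𝓝 (t₀, w), p ∈ X ∧ φ p < φ (t₀, w) + 1 :=
      (hX.eventually_mem hw).and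
        ((hφ.continuousAt (hX.mem_nhds hw)).eventually (gt_mem_nhds (lt_add_one _)))
    obtain ⟨ε, hε, h⟩ := Metric.eventually_nhds_iff_ball.1 h1
    refine ⟨ε / 3, by positivity, φ (t₀, w) + 1, fun t ht y hy y' hy' => ?_⟩
    have := h (t, y') (by
      rw [mem_ball] at *
      rw [mem_closedBall] at hy'
      rw [Prod.dist_eq]
      refine max_lt (by simp only; linarith) ?_
      have := dist_triangle y' y w
      simp only
      linarith)
    exact ⟨this.1, this.2.le⟩
  have hbound : ∀ w ∈ {w : Fin n → ℂ | (t₀, w) ∈ X}, ∃ R > 0, ∃ C : ℝ, ∀ᶠ t in (U : Filter _),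
      DifferentiableOn ℂ (F t) (ball w R) ∧ ∀ y ∈ ball w R, ‖F t y‖ ≤ C := by
    intro w hw
    obtain ⟨R, hR, M, h⟩ := hgeo w hw
    set V := volume (closedBall (0 : Fin n → ℂ) R)
    have hV0 : V ≠ 0 := (measure_closedBall_pos volume _ hR).ne'
    have hVt : V ≠ ⊤ := measure_closedBall_lt_top.ne
    refine ⟨R, hR, Real.sqrt ((ENNReal.ofReal (Real.exp M) / V).toReal), ?_⟩
    filter_upwards [hFU, hU0 (ball_mem_nhds t₀ hR)] with t ht htR
    refine ⟨ht.1.mono fun y hy => (h t htR y hy y (mem_closedBall_self hR.le)).1, fun y hy => ?_⟩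
    have hpb := point_bound (φ := fun w => φ (t, w)) (M := M) ht.1
      (fun y' hy' => (h t htR y hy y' hy').1) (fun y' hy' => (h t htR y hy y' hy').2)
    have h2 : ‖F t y‖ₑ ^ 2 ≤ ENNReal.ofReal (Real.exp M) / V := by
      rw [ENNReal.le_div_iff_mul_le (Or.inl hV0) (Or.inl hVt)]
      refine hpb.trans ?_
      calc _ ≤ ENNReal.ofReal (Real.exp M) * 1 := by gcongr; exact ht.2.1
        _ = _ := mul_one _
    apply Real.le_sqrt_of_sq_le
    rw [← ofReal_norm_eq_enorm, ← ENNReal.ofReal_pow (norm_nonneg _)] at h2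
    exact (ENNReal.ofReal_le_iff_le_toReal (ENNReal.div_ne_top ENNReal.ofReal_ne_top hV0)).1 h2
  obtain ⟨f, hf⟩ := montel_ultra U _ F hbound
  have hfd : DifferentiableOn ℂ f {w : Fin n → ℂ | (t₀, w) ∈ X} := fun w hw =>
    ((hf w hw).1 (hΩo.mem_nhds hw)).differentiableWithinAt
  -- value at z
  have hfz : c' ≤ ENNReal.ofReal (‖f z‖ ^ 2) := by
    have h1 : Tendsto (fun t => F t z) U (𝓝 (f z)) :=
      (hf z ht₀).2.comp (tendsto_id.prodMk tendsto_const_nhds)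
    exact ge_of_tendsto (ENNReal.tendsto_ofReal (h1.norm.pow 2)) (hFU.mono fun t ht => ht.2.2)
  -- norm bound
  have hK : ∀ K : Set (Fin n → ℂ), IsCompact K → K ⊆ {w : Fin n → ℂ | (t₀, w) ∈ X} →
      ∫⁻ y in K, ENNReal.ofReal (‖f y‖ ^ 2 * Real.exp (-(φ (t₀, y)))) ≤ 1 := by
    intro K hKc hKs
    have hVt : volume K ≠ ⊤ := hKc.measure_lt_top.ne
    have hε : ∀ ε : NNReal, 0 < ε →
        ∫⁻ y in K, ENNReal.ofReal (‖f y‖ ^ 2 * Real.exp (-(φ (t₀, y)))) ≤ 1 + ε * volume K := by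
      intro ε hε
      have hev : ∀ᶠ t in (U : Filter _), ∀ y ∈ K, (t, y) ∈ X ∧
          ‖f y‖ ^ 2 * Real.exp (-(φ (t₀, y))) ≤ ‖F t y‖ ^ 2 * Real.exp (-(φ (t, y))) + ε := by
        have hloc : ∀ w ∈ K, ∀ᶠ p in (U : Filter _) ×ˢ 𝓝 w, (p.1, p.2) ∈ X ∧
            ‖f p.2‖ ^ 2 * Real.exp (-(φ (t₀, p.2))) ≤
              ‖F p.1 p.2‖ ^ 2 * Real.exp (-(φ (p.1, p.2))) + ε := by
          intro w hwK
          have hw := hKs hwK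
          have hle : (U : Filter _) ×ˢ 𝓝 w ≤ 𝓝 (t₀, w) := by
            rw [nhds_prod_eq]; exact prod_mono hU0 le_rfl
          have hφt : Tendsto φ ((U : Filter _) ×ˢ 𝓝 w) (𝓝 (φ (t₀, w))) :=
            (hφ.continuousAt (hX.mem_nhds hw)).mono_left hle
          have hφ0 : Tendsto (fun y => φ (t₀, y)) (𝓝 w) (𝓝 (φ (t₀, w))) :=
            ContinuousAt.comp (f := fun y => (t₀, y)) (hφ.continuousAt (hX.mem_nhds hw))
              (Continuous.prodMk_right t₀).continuousAt
          have hfc : Tendsto f (𝓝 w) (𝓝 (f w)) := ((hf w hw).1 (hΩo.mem_nhds hw)).continuousAt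
          have hA := ((hf w hw).2.norm.pow 2).mul ((Real.continuous_exp.tendsto _).comp hφt.neg)
          have hB := ((hfc.norm.pow 2).mul ((Real.continuous_exp.tendsto _).comp hφ0.neg)).comp
            (tendsto_snd (f := (U : Filter (Fin m → ℂ))))
          have hD := (hB.sub hA)
          rw [sub_self] at hD
          filter_upwards [hle (hX.mem_nhds hw), hD.eventually (gt_mem_nhds (NNReal.coe_pos.2 hε))]
            with p h1 h2
          refine ⟨h1, ?_⟩
          simp only [Function.comp_apply] at h2
          change _ - ‖F p.1 p.2‖ ^ 2 * Real.exp (-(φ (p.1, p.2))) < _ at h2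
          linarith
        have : ∀ᶠ p in (U : Filter _) ×ˢ 𝓝ˢ K, (p.1, p.2) ∈ X ∧
            ‖f p.2‖ ^ 2 * Real.exp (-(φ (t₀, p.2))) ≤
              ‖F p.1 p.2‖ ^ 2 * Real.exp (-(φ (p.1, p.2))) + ε := by
          rw [hKc.prod_nhdsSet_eq_biSup]
          simpa only [eventually_iSup] using hloc
        exact this.curry.mono fun _ h => h.self_of_nhdsSet
      obtain ⟨t, ht1, ht2⟩ := (hFU.and hev).exists
      calc ∫⁻ y in K, ENNReal.ofReal (‖f y‖ ^ 2 * Real.exp (-(φ (t₀, y))))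
          ≤ ∫⁻ y in K, (ENNReal.ofReal (‖F t y‖ ^ 2 * Real.exp (-(φ (t, y)))) + ε) := by
            refine setLIntegral_mono' hKc.measurableSet fun y hy => ?_
            refine (ENNReal.ofReal_le_ofReal (ht2 y hy).2).trans ?_
            rw [ENNReal.ofReal_add (by positivity) ε.coe_nonneg, ENNReal.ofReal_coe_nnreal]
        _ = (∫⁻ y in K, ENNReal.ofReal (‖F t y‖ ^ 2 * Real.exp (-(φ (t, y))))) + ε * volume K := by
            rw [lintegral_add_right _ measurable_const, setLIntegral_const]
        _ ≤ 1 + ε * volume K := by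
            gcongr
            exact (lintegral_mono_set fun y hy => (ht2 y hy).1).trans ht1.2.1
    have hlim : Tendsto (fun ε : NNReal => 1 + (ε : ℝ≥0∞) * volume K) (𝓝[>] 0) (𝓝 1) := by
      have h1 : Tendsto (fun ε : NNReal => (ε : ℝ≥0∞) * volume K) (𝓝 0) (𝓝 ((0 : NNReal) * volume K)) :=
        ENNReal.Tendsto.mul_const (ENNReal.tendsto_coe.2 tendsto_id) (Or.inr hVt)
      have := (h1.const_add 1).mono_left (nhdsWithin_le_nhds (s := Ioi 0))
      simpa using this
    exact ge_of_tendsto hlim (eventually_mem_nhdsWithin.mono fun ε h => hε ε h)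
  have hN1 : bergNormSq {w : Fin n → ℂ | (t₀, w) ∈ X} (fun w => φ (t₀, w)) volume f ≤ 1 := by
    obtain ⟨A, hAc, hAs, hAu, hAm⟩ := hΩo.exists_iUnion_isClosed
    have hun : (⋃ k : ℕ, A k ∩ closedBall 0 (k : ℝ)) = {w : Fin n → ℂ | (t₀, w) ∈ X} := by
      rw [← hAu]
      refine subset_antisymm (iUnion_mono fun k => inter_subset_left) ?_
      intro y hy
      obtain ⟨k, hk⟩ := mem_iUnion.1 hy
      obtain ⟨j, hj⟩ := exists_nat_ge ‖y‖
      refine mem_iUnion.2 ⟨max k j, hAm (le_max_left _ _) hk, ?_⟩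
      rw [mem_closedBall_zero_iff]
      exact hj.trans (by exact_mod_cast le_max_right k j)
    unfold bergNormSq
    rw [← hun, setLIntegral_iUnion_of_directed]
    · refine iSup_le fun k => hK _ ((isCompact_closedBall _ _).inter_left (hAc k)) ?_
      exact inter_subset_left.trans (hAs k)
    · refine Monotone.directed_le fun i j hij => ?_
      exact inter_subset_inter (hAm hij) (closedBall_subset_closedBall (by exact_mod_cast hij))
  have hN0 : bergNormSq {w : Fin n → ℂ | (t₀, w) ∈ X} (fun w => φ (t₀, w)) volume f ≠ 0 := by
    intro h0
    obtain ⟨R, hR, M, h⟩ := hgeo z ht₀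
    have h := h t₀ (mem_ball_self hR) z (mem_ball_self hR)
    have hpb := point_bound (φ := fun w => φ (t₀, w)) (M := M) hfd
      (fun y' hy' => (h y' hy').1) (fun y' hy' => (h y' hy').2)
    rw [h0, mul_zero, nonpos_iff_eq_zero, mul_eq_zero] at hpb
    have hz : f z = 0 := by
      rcases hpb with h | h
      · simpa using h
      · exact absurd h (measure_closedBall_pos volume _ hR).ne'
    rw [hz] at hfz
    simp at hfz
    exact not_lt_bot (hfz ▸ hc0)
  have hfin : ENNReal.ofReal (‖f z‖ ^ 2) ≤
      bergKernel {w : Fin n → ℂ | (t₀, w) ∈ X} (fun w => φ (t₀, w)) volume z := by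
    refine le_trans ?_ (le_iSup₂_of_le f hfd (le_iSup₂_of_le hN0 (hN1.trans_lt ENNReal.one_lt_top).ne le_rfl))
    rw [ENNReal.le_div_iff_mul_le (Or.inl hN0) (Or.inl (hN1.trans_lt ENNReal.one_lt_top).ne)]
    exact mul_le_of_le_one_right' hN1
  exact absurd (hfz.trans hfin) (not_le.2 hc0)

/-- **Upper semicontinuity of the fiberwise Bergman kernel** for a bounded pseudoconvex
family `X = {ρ < 0}` cut out of an open set `W ⊆ ℂ^m × ℂ^n` by a smooth
plurisubharmonic function `ρ`. -/
theorem bergKernel_upperSemicontinuous {m n : ℕ}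
    (W : Set ((Fin m → ℂ) × (Fin n → ℂ))) (hW : IsOpen W)
    (ρ : (Fin m → ℂ) × (Fin n → ℂ) → ℝ) (hρ : ContDiffOn ℝ (⊤ : ℕ∞) ρ W)
    (hρpsd : ∀ p ∈ W, ∀ v : (Fin m → ℂ) × (Fin n → ℂ),
      0 ≤ (wder (fun y => wderBar (fun q => (ρ q : ℂ)) v y) v p).re)
    (X : Set ((Fin m → ℂ) × (Fin n → ℂ))) (hX : X = {p ∈ W | ρ p < 0})
    (hXb : Bornology.IsBounded X) (hXcl : closure X ⊆ W)
    (φ : (Fin m → ℂ) × (Fin n → ℂ) → ℝ) (hφ : ContDiffOn ℝ (⊤ : ℕ∞) φ W)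
    (z : Fin n → ℂ) :
    UpperSemicontinuousOn
      (fun t => bergKernel {w : Fin n → ℂ | (t, w) ∈ X} (fun w => φ (t, w)) volume z)
      {t : Fin m → ℂ | (t, z) ∈ X} := by
  have hXo : IsOpen X := by
    rw [hX]
    exact hρ.continuousOn.isOpen_inter_preimage hW isOpen_Iio
  exact usc_aux X hXo φ (hφ.continuousOn.mono (by rw [hX]; exact fun p hp => hp.1)) z
end
end
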